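/- Let S_1, …, S_k be bounded linear operators on a complex Hilbert space H and let n ≥ 1 be an integer. Then ω( Σ_{i=1}^k S_i )^{2n} ≤ (k^{2n−1}/√2) · Σ_{i=1}^k ω( |S_i|^{2n} + i |S_i^*|^{2n} ). -/

import Mathlib

noncomputable section

open ContinuousLinearMap

variable {H : Type*} [NormedAddCommGroup H] [InnerProductSpace ℂ H] [CompleteSpace H]

/-- The numerical radius: `ω(T) := sup {|⟨T x, x⟩| : ‖x‖ = 1}`. -/
def nrad (T : H →L[ℂ] H) : ℝ :=
  sSup {c : ℝ | ∃ x : H, ‖x‖ = 1 ∧ c = ‖(inner ℂ (T x) x : ℂ)‖}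

/-- `R` is the absolute value `|X| = (X* X)^{1/2}` of `X`, i.e. the positive square root
of `X* X`. -/
def IsAbsOf (X R : H →L[ℂ] H) : Prop :=
  R.IsPositive ∧ R * R = adjoint X * X

set_option linter.unusedSectionVars false in
/-- The values `‖⟨T x, x⟩‖` at unit vectors are at most the numerical radius. -/
theorem norm_inner_le_nrad (T : H →L[ℂ] H) {x : H} (hx : ‖x‖ = 1) :
    ‖(inner ℂ (T x) x : ℂ)‖ ≤ nrad T := by
  refine le_csSup ⟨‖T‖, ?_⟩ ⟨x, hx, rfl⟩
  rintro c ⟨y, hy, rfl⟩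
  calc ‖(inner ℂ (T y) y : ℂ)‖ ≤ ‖T y‖ * ‖y‖ := norm_inner_le_norm _ _
    _ ≤ ‖T‖ * ‖y‖ * ‖y‖ := by gcongr; exact T.le_opNorm y
    _ = ‖T‖ := by simp [hy]

set_option linter.unusedSectionVars false in
theorem nrad_nonneg (T : H →L[ℂ] H) : 0 ≤ nrad T := by
  apply Real.sSup_nonneg
  rintro c ⟨y, -, rfl⟩
  exact norm_nonneg _

set_option linter.unusedSectionVars false in
theorem nrad_pow_le {T : H →L[ℂ] H} {m : ℕ} (hm : m ≠ 0) {C : ℝ} (hC : 0 ≤ C)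
    (h : ∀ x : H, ‖x‖ = 1 → ‖(inner ℂ (T x) x : ℂ)‖ ^ m ≤ C) : nrad T ^ m ≤ C := by
  have hroot : (C ^ (m⁻¹ : ℝ)) ^ m = C := Real.rpow_inv_natCast_pow hC hm
  have hle : nrad T ≤ C ^ (m⁻¹ : ℝ) := by
    refine Real.sSup_le ?_ (Real.rpow_nonneg hC _)
    rintro c ⟨x, hx, rfl⟩
    refine le_of_pow_le_pow_left₀ hm (Real.rpow_nonneg hC _) ?_
    rw [hroot]
    exact h x hx
  calc nrad T ^ m ≤ (C ^ (m⁻¹ : ℝ)) ^ m := pow_le_pow_left₀ (nrad_nonneg T) hle m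
    _ = C := hroot

theorem inner_pow_two_mul_apply {R : H →L[ℂ] H} (hR : IsSelfAdjoint R) (n : ℕ) (x : H) :
    inner ℂ ((R ^ (2 * n)) x) x = ((‖(R ^ n) x‖ ^ 2 : ℝ) : ℂ) := by
  have hsymm := (hR.pow n).isSymmetric
  rw [two_mul, pow_add, mul_apply_eq_comp]
  refine (hsymm ((R ^ n) x) x).trans ?_
  exact_mod_cast inner_self_eq_norm_sq_to_K (𝕜 := ℂ) ((R ^ n) x)

/-- The orbit norms of a self-adjoint operator are log-convex. -/
theorem norm_pow_succ_apply_sq_le {R : H →L[ℂ] H} (hR : IsSelfAdjoint R) (m : ℕ) (x : H) :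
    ‖(R ^ (m + 1)) x‖ ^ 2 ≤ ‖(R ^ m) x‖ * ‖(R ^ (m + 2)) x‖ := by
  have hsymm := hR.isSymmetric
  have hinner : inner ℂ ((R ^ (m + 1)) x) ((R ^ (m + 1)) x)
      = inner ℂ ((R ^ m) x) ((R ^ (m + 2)) x) := by
    rw [pow_succ' R (m + 1), mul_apply_eq_comp]
    nth_rewrite 1 [pow_succ']
    rw [mul_apply_eq_comp]
    exact hsymm _ _
  have hnorm : ‖(inner ℂ ((R ^ (m + 1)) x) ((R ^ (m + 1)) x) : ℂ)‖ = ‖(R ^ (m + 1)) x‖ ^ 2 := by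
    rw [inner_self_eq_norm_sq_to_K]
    simp
  rw [← hnorm, hinner]
  exact norm_inner_le_norm _ _

theorem norm_apply_mul_norm_pow_apply_le {R : H →L[ℂ] H} (hR : IsSelfAdjoint R) {x : H}
    (hx : ‖x‖ = 1) (m : ℕ) : ‖R x‖ * ‖(R ^ m) x‖ ≤ ‖(R ^ (m + 1)) x‖ := by
  induction m with
  | zero => simp [hx]
  | succ m ih =>
    rcases (norm_nonneg ((R ^ (m + 1)) x)).eq_or_lt with h0 | hpos
    · rw [← h0, mul_zero]
      exact norm_nonneg _
    · refine le_of_mul_le_mul_right ?_ hpos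
      calc ‖R x‖ * ‖(R ^ (m + 1)) x‖ * ‖(R ^ (m + 1)) x‖
          = ‖R x‖ * ‖(R ^ (m + 1)) x‖ ^ 2 := by ring
        _ ≤ ‖R x‖ * (‖(R ^ m) x‖ * ‖(R ^ (m + 2)) x‖) := by
            gcongr
            exact norm_pow_succ_apply_sq_le hR m x
        _ = ‖R x‖ * ‖(R ^ m) x‖ * ‖(R ^ (m + 2)) x‖ := by ring
        _ ≤ ‖(R ^ (m + 1)) x‖ * ‖(R ^ (m + 2)) x‖ := by gcongr
        _ = ‖(R ^ (m + 1 + 1)) x‖ * ‖(R ^ (m + 1)) x‖ := mul_comm _ _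

/-- McCarthy's inequality for natural powers of a self-adjoint operator. -/
theorem norm_apply_pow_le_norm_pow_apply {R : H →L[ℂ] H} (hR : IsSelfAdjoint R) {x : H}
    (hx : ‖x‖ = 1) (n : ℕ) : ‖R x‖ ^ n ≤ ‖(R ^ n) x‖ := by
  induction n with
  | zero => simp [hx]
  | succ n ih =>
    calc ‖R x‖ ^ (n + 1) = ‖R x‖ * ‖R x‖ ^ n := pow_succ' _ _
      _ ≤ ‖R x‖ * ‖(R ^ n) x‖ := by gcongr
      _ ≤ ‖(R ^ (n + 1)) x‖ := norm_apply_mul_norm_pow_apply_le hR hx n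

theorem IsAbsOf.norm_apply_eq {X R : H →L[ℂ] H} (h : IsAbsOf X R) (x : H) : ‖R x‖ = ‖X x‖ := by
  have hsymm := h.1.isSelfAdjoint.isSymmetric
  have hinner : inner ℂ (R x) (R x) = inner ℂ (X x) (X x) := by
    calc inner ℂ (R x) (R x) = inner ℂ ((R * R) x) x := (hsymm (R x) x).symm
      _ = inner ℂ ((adjoint X * X) x) x := by rw [h.2]
      _ = inner ℂ (X x) (X x) := adjoint_inner_left X x (X x)
  rw [@norm_eq_sqrt_re_inner ℂ, @norm_eq_sqrt_re_inner ℂ, hinner]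

theorem IsAbsOf.norm_apply_pow_le {X R : H →L[ℂ] H} (h : IsAbsOf X R) {x : H} (hx : ‖x‖ = 1)
    (n : ℕ) : ‖X x‖ ^ (2 * n) ≤ ‖(R ^ n) x‖ ^ 2 := by
  rw [← h.norm_apply_eq, mul_comm, pow_mul]
  gcongr
  exact norm_apply_pow_le_norm_pow_apply h.1.isSelfAdjoint hx n

theorem le_norm_sub_I_mul_div_sqrt_two {c a b : ℝ} (hc : 0 ≤ c) (ha : c ≤ a) (hb : c ≤ b) :
    c ≤ ‖(a : ℂ) - Complex.I * b‖ / √2 := by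
  rw [le_div_iff₀ (by positivity)]
  refine le_of_pow_le_pow_left₀ two_ne_zero (norm_nonneg _) ?_
  rw [mul_pow, Real.sq_sqrt zero_le_two, Complex.sq_norm, Complex.normSq_apply]
  simp
  nlinarith

/-- The single-operator pointwise bound. -/
theorem norm_inner_pow_le_nrad {X R Q : H →L[ℂ] H} (hR : IsAbsOf X R)
    (hQ : IsAbsOf (adjoint X) Q) {x : H} (hx : ‖x‖ = 1) (n : ℕ) :
    ‖(inner ℂ (X x) x : ℂ)‖ ^ (2 * n) ≤
      nrad (R ^ (2 * n) + Complex.I • Q ^ (2 * n)) / √2 := by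
  have hX : ‖(inner ℂ (X x) x : ℂ)‖ ≤ ‖X x‖ := by
    simpa [hx] using norm_inner_le_norm (𝕜 := ℂ) (X x) x
  have hX' : ‖(inner ℂ (X x) x : ℂ)‖ ≤ ‖adjoint X x‖ := by
    rw [← adjoint_inner_right]
    simpa [hx] using norm_inner_le_norm (𝕜 := ℂ) x (adjoint X x)
  refine (le_norm_sub_I_mul_div_sqrt_two (by positivity)
    ((pow_le_pow_left₀ (norm_nonneg _) hX _).trans (hR.norm_apply_pow_le hx n))
    ((pow_le_pow_left₀ (norm_nonneg _) hX' _).trans (hQ.norm_apply_pow_le hx n))).trans ?_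
  gcongr
  have h := norm_inner_le_nrad (R ^ (2 * n) + Complex.I • Q ^ (2 * n)) hx
  rwa [add_apply, smul_apply, inner_add_left, inner_smul_left,
    inner_pow_two_mul_apply hR.1.isSelfAdjoint, inner_pow_two_mul_apply hQ.1.isSelfAdjoint,
    Complex.conj_I, neg_mul, ← sub_eq_add_neg] at h

theorem stmt19 (k : ℕ) (hk : 1 ≤ k) (n : ℕ) (hn : 1 ≤ n)
    (S absS absSstar : Fin k → (H →L[ℂ] H))
    (habs : ∀ i, IsAbsOf (S i) (absS i))
    (habsStar : ∀ i, IsAbsOf (adjoint (S i)) (absSstar i)) :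
    nrad (∑ i, S i) ^ (2 * n) ≤
      ((k : ℝ) ^ (2 * n - 1) / Real.sqrt 2) *
        ∑ i, nrad ((absS i) ^ (2 * n) + Complex.I • (absSstar i) ^ (2 * n)) := by
  have hC : 0 ≤ ((k : ℝ) ^ (2 * n - 1) / Real.sqrt 2) *
      ∑ i, nrad ((absS i) ^ (2 * n) + Complex.I • (absSstar i) ^ (2 * n)) :=
    mul_nonneg (by positivity) (Finset.sum_nonneg fun i _ => nrad_nonneg _)
  refine nrad_pow_le (by omega) hC fun x hx => ?_
  have hsum : ‖(inner ℂ ((∑ i, S i) x) x : ℂ)‖ ≤ ∑ i, ‖(inner ℂ (S i x) x : ℂ)‖ := by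
    rw [sum_apply, sum_inner]
    exact norm_sum_le _ _
  have hmean : (∑ i, ‖(inner ℂ (S i x) x : ℂ)‖) ^ (2 * n) ≤
      (k : ℝ) ^ (2 * n - 1) * ∑ i, ‖(inner ℂ (S i x) x : ℂ)‖ ^ (2 * n) := by
    have hpos : (0 : ℝ) < (k : ℝ) ^ (2 * n - 1) := by positivity
    have h := pow_sum_div_card_le_sum_pow (s := Finset.univ)
      (f := fun i => ‖(inner ℂ (S i x) x : ℂ)‖) (fun i _ => norm_nonneg _) (2 * n - 1)
    rw [Finset.card_univ, Fintype.card_fin, div_le_iff₀' hpos,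
      Nat.sub_add_cancel (by omega)] at h
    exact h
  calc ‖(inner ℂ ((∑ i, S i) x) x : ℂ)‖ ^ (2 * n)
      ≤ (∑ i, ‖(inner ℂ (S i x) x : ℂ)‖) ^ (2 * n) := by gcongr
    _ ≤ (k : ℝ) ^ (2 * n - 1) * ∑ i, ‖(inner ℂ (S i x) x : ℂ)‖ ^ (2 * n) := hmean
    _ ≤ (k : ℝ) ^ (2 * n - 1) *
        ∑ i, nrad ((absS i) ^ (2 * n) + Complex.I • (absSstar i) ^ (2 * n)) / √2 := by
      gcongr with i
      exact norm_inner_pow_le_nrad (habs i) (habsStar i) hx n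
    _ = _ := by
      rw [← Finset.sum_div]
      ring
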